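/- arXiv:1904.07210 — 2 statements merged into one kernel-verified Lean document; each statement's English description precedes it below -/
import Mathlib

section
/- Let H be a complex Hilbert space and let T₁ and T₂ be densely defined self-adjoint linear operators on H that are nonnegative (i.e. ⟨Tᵢu, u⟩ ≥ 0 for all u in Dom(Tᵢ)), and assume Dom(T₁) ∩ Dom(T₂) is dense in H. Assume further: (i) there is a constant τ > 0 such that ⟨T₂u, u⟩ ≥ τ‖u‖² for every u ∈ Dom(T₂) (so that T₂ is a bijection of Dom(T₂) onto H, with bounded inverse T₂⁻¹); and (ii) there is a constant ξ with 0 ≤ ξ < 1 such that for every u ∈ Dom(T₁) and every v ∈ Dom(T₂) with T₂v = u one has Re⟨T₁u, v⟩ + ξ‖u‖² ≥ 0. Then the operator T₁ + T₂, with domain Dom(T₁) ∩ Dom(T₂), is self-adjoint. -/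
/-! It suffices that the symmetric operator `T₁ + T₂` is surjective: surjectivity of a symmetric
operator forces both a dense domain and self-adjointness. With `R = T₂⁻¹`, the semiboundedness
hypothesis reads `Re ⟪R (T₁ u), u⟫ ≥ -ξ ‖u‖²`, so `u ↦ u + R (T₁ u)` is bounded below by `1 - ξ` on
`Dom T₁`. Its adjoint is therefore onto: for every `f` there is `z` with
`⟪z, u + R (T₁ u)⟫ = ⟪f, u⟫`, that is `⟪f - z, u⟫ = ⟪R z, T₁ u⟫`, for all `u ∈ Dom T₁`. As `T₁` is
self-adjoint, `R z ∈ Dom T₁` and `T₁ (R z) = f - z = f - T₂ (R z)`. -/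

open scoped InnerProductSpace

section

variable {𝕜 E F H : Type*} [RCLike 𝕜]
  [NormedAddCommGroup E] [InnerProductSpace 𝕜 E]
  [NormedAddCommGroup F] [InnerProductSpace 𝕜 F]
  [NormedAddCommGroup H] [InnerProductSpace 𝕜 H]

theorem norm_le_inv_mul_norm_of_le_re_inner {c : ℝ} (hc : 0 < c) {x y : H}
    (h : c * ‖x‖ ^ 2 ≤ RCLike.re ⟪y, x⟫_𝕜) : ‖x‖ ≤ c⁻¹ * ‖y‖ := by
  rcases (norm_nonneg x).eq_or_lt with hx | hx
  · rw [← hx]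
    positivity
  · rw [le_inv_mul_iff₀ hc]
    refine le_of_mul_le_mul_right ?_ hx
    calc c * ‖x‖ * ‖x‖ = c * ‖x‖ ^ 2 := by ring
      _ ≤ RCLike.re ⟪y, x⟫_𝕜 := h
      _ ≤ ‖y‖ * ‖x‖ := re_inner_le_norm y x

theorem exists_inner_apply_eq_of_norm_le [CompleteSpace H] {V : Type*} [NormedAddCommGroup V]
    [NormedSpace 𝕜 V] {g : V →ₗ[𝕜] H} {K : ℝ} (hg : ∀ u, ‖u‖ ≤ K * ‖g u‖) (φ : StrongDual 𝕜 V) :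
    ∃ z, ∀ u, ⟪z, g u⟫_𝕜 = φ u := by
  have hinj : Function.Injective g := by
    refine (injective_iff_map_eq_zero g).2 fun u hu => norm_le_zero_iff.1 ?_
    simpa [hu] using hg u
  let e : V ≃ₗ[𝕜] g.range := .ofInjective g hinj
  have he : ∀ y, ‖e.symm y‖ ≤ K * ‖y‖ := fun y => by
    obtain ⟨u, rfl⟩ := e.surjective y
    simpa [e] using hg u
  obtain ⟨ψ, hψ, -⟩ :=
    exists_extension_norm_eq g.range (φ.comp (e.symm.toLinearMap.mkContinuous K he))
  refine ⟨(InnerProductSpace.toDual 𝕜 H).symm ψ, fun u => ?_⟩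
  simpa [e] using hψ (e u)

theorem isFormalAdjoint_add {T₁ T₂ : E →ₗ.[𝕜] F} {S₁ S₂ : F →ₗ.[𝕜] E}
    (h₁ : T₁.IsFormalAdjoint S₁) (h₂ : T₂.IsFormalAdjoint S₂) :
    (T₁ + T₂).IsFormalAdjoint (S₁ + S₂) := fun x y => by
  rw [LinearPMap.add_apply, LinearPMap.add_apply, inner_add_left, inner_add_right]
  exact congrArg₂ (· + ·) (h₁ ⟨x, x.2.1⟩ ⟨y, y.2.1⟩) (h₂ ⟨x, x.2.2⟩ ⟨y, y.2.2⟩)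

theorem injective_of_isFormalAdjoint_of_surjective {T : E →ₗ.[𝕜] F} {S : F →ₗ.[𝕜] E}
    (h : T.IsFormalAdjoint S) (hS : Function.Surjective S) : Function.Injective T := by
  refine (injective_iff_map_eq_zero T.toFun).2 fun x hx => ?_
  obtain ⟨y, hy⟩ := hS x
  have hxx : ⟪(x : E), x⟫_𝕜 = 0 := by
    calc ⟪(x : E), x⟫_𝕜 = ⟪(x : E), S y⟫_𝕜 := by rw [hy]
      _ = ⟪T x, (y : F)⟫_𝕜 := (h x y).symm
      _ = 0 := by rw [← LinearPMap.toFun_eq_coe, hx, inner_zero_left]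
  exact Subtype.ext (inner_self_eq_zero.1 hxx)

theorem dense_domain_of_isFormalAdjoint_of_surjective [CompleteSpace E] {T : E →ₗ.[𝕜] F}
    {S : F →ₗ.[𝕜] E} (h : T.IsFormalAdjoint S) (hT : Function.Surjective T)
    (hS : Function.Surjective S) : Dense (T.domain : Set E) := by
  rw [Submodule.dense_iff_topologicalClosure_eq_top, Submodule.topologicalClosure_eq_top_iff,
    Submodule.eq_bot_iff]
  intro x hx
  obtain ⟨w, rfl⟩ := hS x
  obtain ⟨d, hd⟩ := hT w
  have hww : ⟪(w : F), w⟫_𝕜 = 0 := by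
    calc ⟪(w : F), w⟫_𝕜 = ⟪T d, (w : F)⟫_𝕜 := by rw [hd]
      _ = ⟪(d : E), S w⟫_𝕜 := h d w
      _ = 0 := hx d d.2
  have hw : w = 0 := Subtype.ext (inner_self_eq_zero.1 hww)
  rw [hw, LinearPMap.map_zero]

theorem adjoint_eq_of_isFormalAdjoint_of_surjective [CompleteSpace E] {T : E →ₗ.[𝕜] F}
    {S : F →ₗ.[𝕜] E} (h : T.IsFormalAdjoint S) (hT : Function.Surjective T)
    (hS : Function.Surjective S) : T.adjoint = S := by
  have hdense := dense_domain_of_isFormalAdjoint_of_surjective h hT hS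
  have hle : S ≤ T.adjoint := h.le_adjoint hdense
  have hinj : Function.Injective T.adjoint :=
    injective_of_isFormalAdjoint_of_surjective (LinearPMap.adjoint_isFormalAdjoint hdense) hT
  refine (LinearPMap.eq_of_le_of_domain_eq hle (hle.1.antisymm fun y hy => ?_)).symm
  obtain ⟨v, hv⟩ := hS (T.adjoint ⟨y, hy⟩)
  have hvy : (⟨v, hle.1 v.2⟩ : T.adjoint.domain) = ⟨y, hy⟩ := hinj ((hle.2 rfl).symm.trans hv)
  obtain rfl : (v : F) = y := congrArg Subtype.val hvy
  exact v.2

theorem exists_adjoint_apply_eq [CompleteSpace E] {T : E →ₗ.[𝕜] F}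
    (hT : Dense (T.domain : Set E)) {y : F} {w : E}
    (h : ∀ x : T.domain, ⟪w, (x : E)⟫_𝕜 = ⟪y, T x⟫_𝕜) :
    ∃ v : T.adjoint.domain, (v : F) = y ∧ T.adjoint v = w :=
  ⟨⟨y, LinearPMap.mem_adjoint_domain_of_exists y ⟨w, h⟩⟩, rfl, LinearPMap.adjoint_apply_eq hT _ h⟩

theorem adjoint_surjective_of_norm_le [CompleteSpace E] [CompleteSpace F] {T : E →ₗ.[𝕜] F}
    (hT : Dense (T.domain : Set E)) {K : ℝ} (hK : ∀ x : T.domain, ‖(x : E)‖ ≤ K * ‖T x‖) :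
    Function.Surjective T.adjoint := fun f => by
  obtain ⟨z, hz⟩ :=
    exists_inner_apply_eq_of_norm_le (g := T.toFun) hK ((innerSL 𝕜 f).comp T.domain.subtypeL)
  obtain ⟨v, -, hv⟩ := exists_adjoint_apply_eq hT fun x => (hz x).symm
  exact ⟨v, hv⟩

theorem isFormalAdjoint_of_isSelfAdjoint [CompleteSpace H] {T : H →ₗ.[𝕜] H}
    (hT : IsSelfAdjoint T) : T.IsFormalAdjoint T := by
  simpa only [LinearPMap.isSelfAdjoint_def.1 hT] using
    LinearPMap.adjoint_isFormalAdjoint hT.dense_domain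

theorem surjective_of_isSelfAdjoint_of_le_re_inner [CompleteSpace H] {T : H →ₗ.[𝕜] H}
    (hT : IsSelfAdjoint T) {c : ℝ} (hc : 0 < c)
    (h : ∀ u : T.domain, c * ‖(u : H)‖ ^ 2 ≤ RCLike.re ⟪T u, (u : H)⟫_𝕜) :
    Function.Surjective T := by
  have hsurj : Function.Surjective T.adjoint :=
    adjoint_surjective_of_norm_le hT.dense_domain
      fun u => norm_le_inv_mul_norm_of_le_re_inner hc (h u)
  rwa [LinearPMap.isSelfAdjoint_def.1 hT] at hsurj

theorem surjective_add_of_isSelfAdjoint [CompleteSpace H] {T₁ T₂ : H →ₗ.[𝕜] H}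
    (hT₁ : IsSelfAdjoint T₁) (hT₂ : T₂.IsFormalAdjoint T₂) (hsurj : Function.Surjective T₂)
    {ξ : ℝ} (hξ : ξ < 1)
    (hsemibdd : ∀ u : T₁.domain, ∀ v : T₂.domain, T₂ v = (u : H) →
      0 ≤ RCLike.re ⟪T₁ u, (v : H)⟫_𝕜 + ξ * ‖(u : H)‖ ^ 2) :
    Function.Surjective (T₁ + T₂) := fun f => by
  obtain ⟨R, hR⟩ := T₂.toFun.exists_rightInverse_of_surjective (LinearMap.range_eq_top.2 hsurj)
  have hTR : ∀ x, T₂ (R x) = x := LinearMap.congr_fun hR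
  have hRsymm : ∀ x y, ⟪(R x : H), y⟫_𝕜 = ⟪x, (R y : H)⟫_𝕜 := fun x y => by
    simpa only [hTR] using (hT₂ (R x) (R y)).symm
  let g : T₁.domain →ₗ[𝕜] H := T₁.domain.subtype + T₂.domain.subtype ∘ₗ R ∘ₗ T₁.toFun
  have hg : ∀ u, g u = u + R (T₁ u) := fun u => rfl
  have hcoercive : ∀ u : T₁.domain, (1 - ξ) * ‖(u : H)‖ ^ 2 ≤ RCLike.re ⟪g u, (u : H)⟫_𝕜 := by
    intro u
    rw [hg, inner_add_left, map_add, inner_self_eq_norm_sq, hRsymm]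
    linarith [hsemibdd u (R u) (hTR u)]
  obtain ⟨z, hz⟩ := exists_inner_apply_eq_of_norm_le (g := g)
    (fun u => norm_le_inv_mul_norm_of_le_re_inner (sub_pos.2 hξ) (hcoercive u))
    ((innerSL 𝕜 f).comp T₁.domain.subtypeL)
  have hweak : ∀ u : T₁.domain, ⟪f - z, (u : H)⟫_𝕜 = ⟪(R z : H), T₁ u⟫_𝕜 := fun u => by
    have hzu : ⟪z, (u : H) + R (T₁ u)⟫_𝕜 = ⟪f, (u : H)⟫_𝕜 := hz u
    rw [inner_sub_left, ← hzu, inner_add_right, add_sub_cancel_left, hRsymm]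
  have hstrong := exists_adjoint_apply_eq hT₁.dense_domain hweak
  rw [LinearPMap.isSelfAdjoint_def.1 hT₁] at hstrong
  obtain ⟨v, hv, hT₁v⟩ := hstrong
  have hv₂ : (v : H) ∈ T₂.domain := hv ▸ (R z).2
  have hT₂v : T₂ ⟨v, hv₂⟩ = z := (congrArg (⇑T₂) (Subtype.ext hv)).trans (hTR z)
  refine ⟨⟨v, v.2, hv₂⟩, ?_⟩
  rw [LinearPMap.add_apply, hT₁v, hT₂v, sub_add_cancel]

theorem sohr_selfAdjoint_general [CompleteSpace H] {T₁ T₂ : H →ₗ.[𝕜] H}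
    (hT₁ : IsSelfAdjoint T₁) (hT₂ : T₂.IsFormalAdjoint T₂) (hsurj : Function.Surjective T₂)
    {ξ : ℝ} (hξ : ξ < 1)
    (hsemibdd : ∀ u : T₁.domain, ∀ v : T₂.domain, T₂ v = (u : H) →
      0 ≤ RCLike.re ⟪T₁ u, (v : H)⟫_𝕜 + ξ * ‖(u : H)‖ ^ 2) :
    IsSelfAdjoint (T₁ + T₂) :=
  have hsum := surjective_add_of_isSelfAdjoint hT₁ hT₂ hsurj hξ hsemibdd
  adjoint_eq_of_isFormalAdjoint_of_surjective
    (isFormalAdjoint_add (isFormalAdjoint_of_isSelfAdjoint hT₁) hT₂) hsum hsum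

end

/-- **Sohr's lemma.** Let `T₁`, `T₂` be densely defined nonnegative self-adjoint operators
on a complex Hilbert space `H` with `Dom T₁ ⊓ Dom T₂` dense. If `⟨T₂u, u⟩ ≥ τ‖u‖²` on
`Dom T₂` for some `τ > 0`, and `Re⟨T₁u, v⟩ + ξ‖u‖² ≥ 0` whenever `u ∈ Dom T₁`, `v ∈ Dom T₂`
and `T₂v = u`, for some `0 ≤ ξ < 1`, then `T₁ + T₂` (with domain `Dom T₁ ⊓ Dom T₂`)
is self-adjoint. -/
theorem sohr_selfAdjoint
    {H : Type*} [NormedAddCommGroup H] [InnerProductSpace ℂ H] [CompleteSpace H]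
    (T₁ T₂ : H →ₗ.[ℂ] H)
    (hT₁dense : Dense (T₁.domain : Set H))
    (hT₂dense : Dense (T₂.domain : Set H))
    (hT₁sa : T₁.adjoint = T₁)
    (hT₂sa : T₂.adjoint = T₂)
    (hT₁nonneg : ∀ u : T₁.domain, 0 ≤ (⟪T₁ u, (u : H)⟫_ℂ).re)
    (hT₂nonneg : ∀ u : T₂.domain, 0 ≤ (⟪T₂ u, (u : H)⟫_ℂ).re)
    (hdense : Dense ((T₁.domain ⊓ T₂.domain : Submodule ℂ H) : Set H))
    (τ : ℝ) (hτ : 0 < τ)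
    (hcoercive : ∀ u : T₂.domain, τ * ‖(u : H)‖ ^ 2 ≤ (⟪T₂ u, (u : H)⟫_ℂ).re)
    (ξ : ℝ) (hξ0 : 0 ≤ ξ) (hξ1 : ξ < 1)
    (hsemibdd : ∀ u : T₁.domain, ∀ v : T₂.domain, T₂ v = (u : H) →
      0 ≤ (⟪T₁ u, (v : H)⟫_ℂ).re + ξ * ‖(u : H)‖ ^ 2) :
    (T₁ + T₂).adjoint = T₁ + T₂ :=
  sohr_selfAdjoint_general hT₁sa (isFormalAdjoint_of_isSelfAdjoint hT₂sa)
    (surjective_of_isSelfAdjoint_of_le_re_inner hT₂sa hτ hcoercive) hξ1 hsemibdd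
end

section
/- Let h, σ be real numbers with 0 < h ≤ 1 and σ > 0 satisfying 286σ + 18σ² + 15σ³ ≤ 4. Let D, Q, R be nonnegative reals and L, B, P, p₁, p₂ reals satisfying: D ≤ σ·h^(7/4), |L| ≤ σ·h^(3/4), |B| ≤ σ·h^(1/2), |P| ≤ σ·h^(3/2), Q ≤ σ·h^(11/4), R ≤ σ·h^(3/2), |p₁| ≤ D·Q, and |p₂| ≤ D·R. Then |−(1/4)·h^(−3/2)·P − (3/4)·h^(−5/2)·p₁ − (15/16)·h^(−7/2)·D⁴ + (3/8)·h^(−5/2)·D²·L + (1/2)·h^(−1/2)·B + (1/2)·h^(−3/2)·p₂ + (3/4)·h^(−3/2)·L·D² − (1/2)·h^(−3/2)·L²| ≤ σ. -/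
/-!
Each of the eight summands is a numerical constant times `h ^ s * X` with `|X| ≤ c * h ^ a` for
some `a ≥ -s`, where `c` is a power of `σ`. Since `h ≤ 1`, the surplus power of `h` can be dropped,
so the triangle inequality leaves a polynomial in `σ` whose linear coefficient is
`1/4 + 1/2 = 3/4 < 1`: the higher powers are absorbed for small `σ`.
-/

section RpowBounds

variable {h a b c d s x y : ℝ}

lemma nonneg_of_le_mul_rpow (hh : 0 < h) (hx0 : 0 ≤ x) (hx : x ≤ c * h ^ a) : 0 ≤ c :=
  nonneg_of_mul_nonneg_left (hx0.trans hx) (Real.rpow_pos_of_pos hh a)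

lemma mul_le_mul_rpow_add (hh : 0 < h) (hx0 : 0 ≤ x) (hd : 0 ≤ d)
    (hx : x ≤ c * h ^ a) (hy : y ≤ d * h ^ b) : x * y ≤ c * d * h ^ (a + b) := by
  calc x * y ≤ x * (d * h ^ b) := by gcongr
    _ ≤ c * h ^ a * (d * h ^ b) := by gcongr
    _ = c * d * h ^ (a + b) := by rw [Real.rpow_add hh]; ring

lemma pow_le_pow_mul_rpow_mul (hh : 0 ≤ h) (hx0 : 0 ≤ x) (hx : x ≤ c * h ^ a) (n : ℕ) :
    x ^ n ≤ c ^ n * h ^ (a * n) := by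
  calc x ^ n ≤ (c * h ^ a) ^ n := by gcongr
    _ = c ^ n * h ^ (a * n) := by rw [mul_pow, Real.rpow_mul_natCast hh]

lemma abs_rpow_mul_le (hh0 : 0 < h) (hh1 : h ≤ 1) (hx : |x| ≤ c * h ^ a) (hs : 0 ≤ s + a) :
    |h ^ s * x| ≤ c := by
  have hc : 0 ≤ c := nonneg_of_le_mul_rpow hh0 (abs_nonneg x) hx
  calc |h ^ s * x| = h ^ s * |x| := by rw [abs_mul, abs_of_pos (Real.rpow_pos_of_pos hh0 s)]
    _ ≤ h ^ s * (c * h ^ a) := by gcongr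
    _ = c * h ^ (s + a) := by rw [Real.rpow_add hh0]; ring
    _ ≤ c := mul_le_of_le_one_right hc (Real.rpow_le_one hh0.le hh1 hs)

end RpowBounds

lemma quartic_le_self_of_cubic_le {σ : ℝ} (hσ0 : 0 ≤ σ)
    (hσ : 28 * σ + 18 * σ ^ 2 + 15 * σ ^ 3 ≤ 4) :
    3 / 4 * σ + 7 / 4 * σ ^ 2 + 9 / 8 * σ ^ 3 + 15 / 16 * σ ^ 4 ≤ σ := by
  calc 3 / 4 * σ + 7 / 4 * σ ^ 2 + 9 / 8 * σ ^ 3 + 15 / 16 * σ ^ 4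
      = σ / 16 * (12 + (28 * σ + 18 * σ ^ 2 + 15 * σ ^ 3)) := by ring
    _ ≤ σ / 16 * (12 + 4) := by gcongr
    _ = σ := by ring

theorem bilaplacian_sqrt_h_bound_general {h σ D Q R L B P p₁ p₂ : ℝ}
    (hh0 : 0 < h) (hh1 : h ≤ 1) (hD0 : 0 ≤ D)
    (hD : D ≤ σ * h ^ ((7 : ℝ) / 4))
    (hL : |L| ≤ σ * h ^ ((3 : ℝ) / 4))
    (hB : |B| ≤ σ * h ^ ((1 : ℝ) / 2))
    (hP : |P| ≤ σ * h ^ ((3 : ℝ) / 2))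
    (hQ : Q ≤ σ * h ^ ((11 : ℝ) / 4))
    (hR : R ≤ σ * h ^ ((3 : ℝ) / 2))
    (hp₁ : |p₁| ≤ D * Q) (hp₂ : |p₂| ≤ D * R) :
    |(-(1 / 4)) * h ^ (-(3 : ℝ) / 2) * P - (3 / 4) * h ^ (-(5 : ℝ) / 2) * p₁
        - (15 / 16) * h ^ (-(7 : ℝ) / 2) * D ^ 4
        + (3 / 8) * h ^ (-(5 : ℝ) / 2) * D ^ 2 * L
        + (1 / 2) * h ^ (-(1 : ℝ) / 2) * B
        + (1 / 2) * h ^ (-(3 : ℝ) / 2) * p₂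
        + (3 / 4) * h ^ (-(3 : ℝ) / 2) * L * D ^ 2
        - (1 / 2) * h ^ (-(3 : ℝ) / 2) * L ^ 2|
      ≤ 3 / 4 * σ + 7 / 4 * σ ^ 2 + 9 / 8 * σ ^ 3 + 15 / 16 * σ ^ 4 := by
  have hσ0 : 0 ≤ σ := nonneg_of_le_mul_rpow hh0 hD0 hD
  have hp₁_le := hp₁.trans (mul_le_mul_rpow_add hh0 hD0 hσ0 hD hQ)
  have hp₂_le := hp₂.trans (mul_le_mul_rpow_add hh0 hD0 hσ0 hD hR)
  have hD_pow_le := pow_le_pow_mul_rpow_mul hh0.le hD0 hD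
  have hD4_le := (abs_of_nonneg (pow_nonneg hD0 4)).trans_le (hD_pow_le 4)
  have hL2_le := (abs_pow L 2).trans_le (pow_le_pow_mul_rpow_mul hh0.le (abs_nonneg L) hL 2)
  have hD2L_le : |D ^ 2 * L| ≤ σ ^ 2 * σ * h ^ ((7 : ℝ) / 4 * (2 : ℕ) + 3 / 4) := by
    rw [abs_mul, abs_of_nonneg (sq_nonneg D)]
    exact mul_le_mul_rpow_add hh0 (sq_nonneg D) hσ0 (hD_pow_le 2) hL
  have hP_term : |h ^ (-(3 : ℝ) / 2) * P| ≤ σ :=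
    abs_rpow_mul_le hh0 hh1 hP (by norm_num)
  have hp₁_term : |h ^ (-(5 : ℝ) / 2) * p₁| ≤ σ * σ :=
    abs_rpow_mul_le hh0 hh1 hp₁_le (by norm_num)
  have hD4_term : |h ^ (-(7 : ℝ) / 2) * D ^ 4| ≤ σ ^ 4 :=
    abs_rpow_mul_le hh0 hh1 hD4_le (by norm_num)
  have hD2L_term : |h ^ (-(5 : ℝ) / 2) * (D ^ 2 * L)| ≤ σ ^ 2 * σ :=
    abs_rpow_mul_le hh0 hh1 hD2L_le (by norm_num)
  have hB_term : |h ^ (-(1 : ℝ) / 2) * B| ≤ σ :=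
    abs_rpow_mul_le hh0 hh1 hB (by norm_num)
  have hp₂_term : |h ^ (-(3 : ℝ) / 2) * p₂| ≤ σ * σ :=
    abs_rpow_mul_le hh0 hh1 hp₂_le (by norm_num)
  have hLD2_term : |h ^ (-(3 : ℝ) / 2) * (D ^ 2 * L)| ≤ σ ^ 2 * σ :=
    abs_rpow_mul_le hh0 hh1 hD2L_le (by norm_num)
  have hL2_term : |h ^ (-(3 : ℝ) / 2) * L ^ 2| ≤ σ ^ 2 :=
    abs_rpow_mul_le hh0 hh1 hL2_le (by norm_num)
  rw [abs_le] at hP_term hp₁_term hD4_term hD2L_term hB_term hp₂_term hLD2_term hL2_term ⊢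
  constructor <;> linarith

/-- Pointwise bound `|Δ_M²(h^(1/2))| ≤ σ` from the paper's pointwise assumptions on
`h = w⁻¹`, provided `286σ + 18σ² + 15σ³ ≤ 4`. Here `D = |dh|`, `L = Δ_M h`, `B = Δ_M²h`,
`P = Δ_M|dh|²`, `Q = |d|dh|²|`, `R = |dΔ_M h|`, `p₁ = ⟨dh, d|dh|²⟩`, `p₂ = ⟨dh, dΔ_M h⟩`. -/
theorem bilaplacian_sqrt_h_bound (h σ : ℝ) (hh0 : 0 < h) (hh1 : h ≤ 1)
    (hσ0 : 0 < σ) (hσ : 286 * σ + 18 * σ ^ 2 + 15 * σ ^ 3 ≤ 4)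
    (D Q R : ℝ) (hD0 : 0 ≤ D) (hQ0 : 0 ≤ Q) (hR0 : 0 ≤ R)
    (L B P p₁ p₂ : ℝ)
    (hD : D ≤ σ * h ^ ((7 : ℝ) / 4))
    (hL : |L| ≤ σ * h ^ ((3 : ℝ) / 4))
    (hB : |B| ≤ σ * h ^ ((1 : ℝ) / 2))
    (hP : |P| ≤ σ * h ^ ((3 : ℝ) / 2))
    (hQ : Q ≤ σ * h ^ ((11 : ℝ) / 4))
    (hR : R ≤ σ * h ^ ((3 : ℝ) / 2))
    (hp₁ : |p₁| ≤ D * Q) (hp₂ : |p₂| ≤ D * R) :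
    |(-(1 / 4)) * h ^ (-(3 : ℝ) / 2) * P - (3 / 4) * h ^ (-(5 : ℝ) / 2) * p₁
        - (15 / 16) * h ^ (-(7 : ℝ) / 2) * D ^ 4
        + (3 / 8) * h ^ (-(5 : ℝ) / 2) * D ^ 2 * L
        + (1 / 2) * h ^ (-(1 : ℝ) / 2) * B
        + (1 / 2) * h ^ (-(3 : ℝ) / 2) * p₂
        + (3 / 4) * h ^ (-(3 : ℝ) / 2) * L * D ^ 2
        - (1 / 2) * h ^ (-(3 : ℝ) / 2) * L ^ 2| ≤ σ :=
  (bilaplacian_sqrt_h_bound_general hh0 hh1 hD0 hD hL hB hP hQ hR hp₁ hp₂).trans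
    (quartic_le_self_of_cubic_le hσ0.le (by linarith))
end
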